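/- arXiv:1108.3249 — 3 statements merged into one kernel-verified Lean document; each statement's English description precedes it below -/
import Mathlib

section
/- For every positive integer k there exists a constant c ≥ 1, depending only on k, such that for every permutation pattern q of length k and every positive integer n, the number S_n(q) of permutations of length n avoiding q satisfies S_n(q) ≤ c^n. -/
/-- A permutation `p` of length `n` contains the permutation `q` of length `k` as a pattern. -/
def PermContains {n k : ℕ} (p : Equiv.Perm (Fin n)) (q : Equiv.Perm (Fin k)) : Prop :=
  ∃ f : Fin k → Fin n, StrictMono f ∧ ∀ a b : Fin k, p (f a) < p (f b) ↔ q a < q b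

/-- A word `w` over `{1,…,n}` contains the permutation pattern `q` of length `k`. -/
def WordContains {l n k : ℕ} (w : Fin l → Fin n) (q : Equiv.Perm (Fin k)) : Prop :=
  ∃ f : Fin k → Fin l, StrictMono f ∧ ∀ a b : Fin k, w (f a) < w (f b) ↔ q a < q b

/-- `w` is a permutation of the regular multiset `[n]_m`: each letter occurs exactly `m` times. -/
def IsRegularWord {l n : ℕ} (m : ℕ) (w : Fin l → Fin n) : Prop :=
  ∀ j : Fin n, (Finset.univ.filter fun i => w i = j).card = m

/-- Ordered-subgraph containment for simple bipartite graphs given by their edge sets. -/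
def GraphContains {n n' k k' : ℕ} (P : Finset (Fin n × Fin n')) (Q : Finset (Fin k × Fin k')) :
    Prop :=
  ∃ (f : Fin k → Fin n) (f' : Fin k' → Fin n'),
    StrictMono f ∧ StrictMono f' ∧ ∀ v v', (v, v') ∈ Q → (f v, f' v') ∈ P

/-- The bipartite graph associated to a permutation `q`: edges `(i, q i)`. -/
def permGraph {k : ℕ} (q : Equiv.Perm (Fin k)) : Finset (Fin k × Fin k) :=
  Finset.univ.image fun i => (i, q i)

/-- The bipartite graph associated to a word `w`: edges `(i, w i)`. -/
def wordGraph {l n : ℕ} (w : Fin l → Fin n) : Finset (Fin l × Fin n) :=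
  Finset.univ.image fun i => (i, w i)

/-- Pattern containment for 0-1 matrices. -/
def MatContains {n n' k k' : ℕ} (P : Fin n → Fin n' → Bool) (Q : Fin k → Fin k' → Bool) : Prop :=
  ∃ (r : Fin k → Fin n) (c : Fin k' → Fin n'),
    StrictMono r ∧ StrictMono c ∧ ∀ i j, Q i j = true → P (r i) (c j) = true

/-- The permutation matrix of a permutation `q`: 1-entry at `(i, q i)`. -/
def permMatrix {k : ℕ} (q : Equiv.Perm (Fin k)) : Fin k → Fin k → Bool :=
  fun i j => decide (q i = j)

/-- The number of 1-entries of a 0-1 matrix. -/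
def oneEntries {n n' : ℕ} (P : Fin n → Fin n' → Bool) : ℕ :=
  (Finset.univ.filter fun ij : Fin n × Fin n' => P ij.1 ij.2 = true).card

/-- The contraction of a bipartite graph on `([n·m],[n])` to one on `([n],[n])`:
`(i,j)` is an edge iff some vertex `t` in the `i`-th block of `m` consecutive vertices
is joined to `j`. -/
def contraction {n m : ℕ} (G : Finset (Fin (n * m) × Fin n)) : Finset (Fin n × Fin n) :=
  Finset.univ.filter fun ij : Fin n × Fin n =>
    ∃ t : Fin (n * m), (t, ij.2) ∈ G ∧ m * (ij.1 : ℕ) ≤ (t : ℕ) ∧ (t : ℕ) < m * ((ij.1 : ℕ) + 1)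

/-- The 0-1 adjacency matrix of a bipartite graph. -/
def adjMatrix {n n' : ℕ} (G : Finset (Fin n × Fin n')) : Fin n → Fin n' → Bool :=
  fun i j => decide ((i, j) ∈ G)

/-- A word contains the multiset pattern `212`. -/
def Contains212 {l n : ℕ} (w : Fin l → Fin n) : Prop :=
  ∃ i₁ i₂ i₃ : Fin l, i₁ < i₂ ∧ i₂ < i₃ ∧ w i₁ = w i₃ ∧ w i₂ < w i₁

/-!
The proof combines the Marcus–Tardos theorem with Klazar's counting argument.

Cut an `n × n` point set `P` avoiding `q` into `s × s` blocks. The set of nonempty blocks again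
avoids `q`, because `q` has only one point in each row and column. By pigeonhole a horizontal strip
contains boundedly many blocks meeting at least `k` rows: otherwise some `k` of them would meet the
same `k` rows and produce `q`. The same holds for columns in a vertical strip, and every other
block has at most `k ^ 2` points. Taking `s > k ^ 2`, the resulting recursion gives `#P ≤ C * n`.

For the count, cut into `2 × 2` blocks: a contracted set has at most `C * n / 2` points, hence at
most `2 ^ (4 * (C * n / 2))` preimages. So halving `n` costs a factor exponential in `n`, and the
exponents form a geometric series. A permutation is recovered from its graph.
-/

section StanleyWilf

open Finset

variable {α β γ δ : Type*} {k m n r s : ℕ}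

/-! ### Patterns in point sets -/

/-- Containment of the permutation `q` as a pattern in a finite point set `P` of a product of two
orders; `P` may have further points in the chosen rows and columns. On `Fin n × Fin m` this is
equivalent to `GraphContains P (permGraph q)`. -/
def ContainsPattern [Preorder α] [Preorder β] (P : Finset (α × β)) (q : Equiv.Perm (Fin k)) :
    Prop :=
  ∃ (x : Fin k → α) (y : Fin k → β), StrictMono x ∧ StrictMono y ∧ ∀ i, (x i, y (q i)) ∈ P

variable {q : Equiv.Perm (Fin k)} {P : Finset (α × β)} {f : α → γ} {g : β → δ}

theorem ContainsPattern.of_image_swap [Preorder α] [Preorder β] [DecidableEq α] [DecidableEq β]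
    (h : ContainsPattern (P.image Prod.swap) q.symm) : ContainsPattern P q := by
  obtain ⟨y, x, hy, hx, hmem⟩ := h
  refine ⟨x, y, hx, hy, fun i => ?_⟩
  simpa using hmem (q i)

theorem ContainsPattern.of_image_prodMap [LinearOrder α] [LinearOrder β] [Preorder γ] [Preorder δ]
    [DecidableEq γ] [DecidableEq δ] (hf : Monotone f) (hg : Monotone g)
    (h : ContainsPattern (P.image (Prod.map f g)) q) : ContainsPattern P q := by
  obtain ⟨u, v, hu, hv, hmem⟩ := h
  have hlift : ∀ i, ∃ x y, (x, y) ∈ P ∧ f x = u i ∧ g y = v (q i) := by simpa using hmem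
  choose x y hxy hfx hgy using hlift
  refine ⟨x, y ∘ q.symm, fun i j hij => hf.reflect_lt ?_, fun i j hij => hg.reflect_lt ?_,
    fun i => by simpa using hxy i⟩
  · simpa only [hfx] using hu hij
  · simpa [hgy] using hv hij

theorem containsPattern_of_product_subset [LinearOrder α] [LinearOrder β] {S : Finset α}
    {T : Finset β} (hS : k ≤ #S) (hT : k ≤ #T) (h : S ×ˢ T ⊆ P) : ContainsPattern P q :=
  ⟨S.orderEmbOfCardLe hS, T.orderEmbOfCardLe hT, OrderEmbedding.strictMono _,
    OrderEmbedding.strictMono _, fun _ =>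
      h (mk_mem_product (orderEmbOfCardLe_mem ..) (orderEmbOfCardLe_mem ..))⟩

/-! ### Wide and tall blocks -/

section Blocks

variable [DecidableEq γ] [DecidableEq δ]

/-- The part of `P` in the block indexed by `b`, when the two coordinate axes are cut into the
fibres of `f` and of `g`. -/
def block (f : α → γ) (g : β → δ) (P : Finset (α × β)) (b : γ × δ) : Finset (α × β) :=
  {p ∈ P | Prod.map f g p = b}

theorem mem_block {b : γ × δ} {p : α × β} :
    p ∈ block f g P b ↔ p ∈ P ∧ Prod.map f g p = b :=
  mem_filter

theorem card_filter_prodMap_eq_le [Fintype α] [Fintype β] (hf : ∀ c, #{a | f a = c} ≤ r)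
    (hg : ∀ d, #{b | g b = d} ≤ s) (b : γ × δ) : #{p | Prod.map f g p = b} ≤ r * s := by
  have hprod : ({p | Prod.map f g p = b} : Finset (α × β)) =
      ({x | f x = b.1} : Finset α) ×ˢ ({y | g y = b.2} : Finset β) := by
    ext p
    simp [Prod.ext_iff]
  rw [hprod, card_product]
  exact Nat.mul_le_mul (hf _) (hg _)

/-- The wide blocks of Marcus and Tardos: those whose points take at least `k` distinct first
coordinates. -/
def wideBlocks [DecidableEq α] [Fintype γ] [Fintype δ] (f : α → γ) (g : β → δ) (k : ℕ)
    (P : Finset (α × β)) : Finset (γ × δ) :=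
  {b | k ≤ #((block f g P b).image Prod.fst)}

/-- The tall blocks of Marcus and Tardos: those whose points take at least `k` distinct second
coordinates. -/
def tallBlocks [DecidableEq β] [Fintype γ] [Fintype δ] (f : α → γ) (g : β → δ) (k : ℕ)
    (P : Finset (α × β)) : Finset (γ × δ) :=
  {b | k ≤ #((block f g P b).image Prod.snd)}

theorem tallBlocks_eq_image_swap [DecidableEq α] [DecidableEq β] [Fintype γ] [Fintype δ] :
    tallBlocks f g k P = (wideBlocks g f k (P.image Prod.swap)).image Prod.swap := by
  have himage : ∀ b : γ × δ, (block g f (P.image Prod.swap) b.swap).image Prod.fst =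
      (block f g P b).image Prod.snd := fun b => by
    ext y
    simp [mem_block, Prod.ext_iff, and_comm]
  ext b
  rw [mem_image, tallBlocks, mem_filter_univ, ← himage]
  exact ⟨fun h => ⟨b.swap, (mem_filter_univ _).2 h, b.swap_swap⟩, by
    rintro ⟨c, hc, rfl⟩
    simpa [wideBlocks] using hc⟩

theorem card_block_le [DecidableEq α] [DecidableEq β] [Fintype α] [Fintype β] [Fintype γ]
    [Fintype δ] (hf : ∀ c, #{a | f a = c} ≤ s) (hg : ∀ d, #{b | g b = d} ≤ s) (b : γ × δ) :
    #(block f g P b) ≤ k ^ 2 + (if b ∈ wideBlocks f g k P then s ^ 2 else 0) +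
      (if b ∈ tallBlocks f g k P then s ^ 2 else 0) := by
  have hs : #(block f g P b) ≤ s ^ 2 :=
    (card_le_card (filter_subset_filter _ P.subset_univ)).trans
      ((card_filter_prodMap_eq_le hf hg b).trans_eq (sq s).symm)
  split_ifs with hwide htall htall
  · omega
  · omega
  · omega
  · simp only [wideBlocks, tallBlocks, mem_filter_univ, not_le] at hwide htall
    calc #(block f g P b)
        ≤ #((block f g P b).image Prod.fst ×ˢ (block f g P b).image Prod.snd) :=
          card_le_card subset_product
      _ ≤ k * k := by
          rw [card_product]
          exact Nat.mul_le_mul hwide.le htall.le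
      _ = k ^ 2 + 0 + 0 := by ring

end Blocks

theorem exists_card_eq_and_lt_card_filter_subset {ι : Type*} [DecidableEq α] {J : Finset ι}
    {A : Finset α} {S : ι → Finset α} (hSA : ∀ j ∈ J, S j ⊆ A) (hS : ∀ j ∈ J, k ≤ #(S j))
    (hJ : (#A).choose k * m < #J) : ∃ T, #T = k ∧ m < #{j ∈ J | T ⊆ S j} := by
  have hsub : ∀ j ∈ J, ∃ T ⊆ S j, #T = k := fun j hj => exists_subset_card_eq (hS j hj)
  choose! T hTS hTk using hsub
  have hmaps : ∀ j ∈ J, T j ∈ A.powersetCard k := fun j hj =>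
    mem_powersetCard.2 ⟨(hTS j hj).trans (hSA j hj), hTk j hj⟩
  obtain ⟨U, hU, hlt⟩ :=
    exists_lt_card_fiber_of_mul_lt_card_of_maps_to hmaps (by rwa [card_powersetCard])
  refine ⟨U, (mem_powersetCard.1 hU).2, hlt.trans_le (card_le_card fun j hj => ?_)⟩
  obtain ⟨hjJ, rfl⟩ := mem_filter.1 hj
  exact mem_filter.2 ⟨hjJ, hTS j hjJ⟩

section Strips

variable [LinearOrder α] [LinearOrder β]

theorem card_filter_le_card_image_fst_block_le [DecidableEq γ] [LinearOrder δ] [Fintype α]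
    [Fintype δ] (hg : Monotone g) (hf : ∀ c, #{a | f a = c} ≤ s) (hP : ¬ ContainsPattern P q)
    (c : γ) :
    #{d | k ≤ #((block f g P (c, d)).image Prod.fst)} ≤ s.choose k * k := by
  by_contra! hlt
  have hsub : ∀ d, (block f g P (c, d)).image Prod.fst ⊆ ({a | f a = c} : Finset α) := by
    intro d x hx
    obtain ⟨p, hp, rfl⟩ := mem_image.1 hx
    simpa using congrArg Prod.fst (mem_block.1 hp).2
  obtain ⟨T, hTk, hlt⟩ := exists_card_eq_and_lt_card_filter_subset (fun d _ => hsub d)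
    (fun d hd => (mem_filter.1 hd).2)
    (hlt.trans_le' (Nat.mul_le_mul_right k (Nat.choose_le_choose k (hf c))))
  refine hP (.of_image_prodMap monotone_id hg
    (containsPattern_of_product_subset hTk.ge hlt.le ?_))
  rintro ⟨x, d⟩ hxd
  obtain ⟨hx, hd⟩ := mem_product.1 hxd
  obtain ⟨p, hp, rfl⟩ := mem_image.1 ((mem_filter.1 hd).2 hx)
  obtain ⟨hpP, hpd⟩ := mem_block.1 hp
  exact mem_image.2 ⟨p, hpP, Prod.ext rfl (Prod.ext_iff.1 hpd).2⟩

theorem card_wideBlocks_le [DecidableEq γ] [LinearOrder δ] [Fintype α] [Fintype γ] [Fintype δ]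
    (hg : Monotone g) (hf : ∀ c, #{a | f a = c} ≤ s) (hP : ¬ ContainsPattern P q) :
    #(wideBlocks f g k P) ≤ Fintype.card γ * (s.choose k * k) := by
  rw [wideBlocks, card_filter, Fintype.sum_prod_type]
  simp_rw [← card_filter]
  exact sum_le_card_nsmul _ _ _ fun c _ => card_filter_le_card_image_fst_block_le hg hf hP c

theorem card_tallBlocks_le [LinearOrder γ] [DecidableEq δ] [Fintype β] [Fintype γ] [Fintype δ]
    (hf : Monotone f) (hg : ∀ d, #{b | g b = d} ≤ s) (hP : ¬ ContainsPattern P q) :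
    #(tallBlocks f g k P) ≤ Fintype.card δ * (s.choose k * k) := by
  rw [tallBlocks_eq_image_swap]
  exact card_image_le.trans (card_wideBlocks_le hf hg (mt .of_image_swap hP))

theorem card_le_mul_card_image_prodMap_add [LinearOrder γ] [LinearOrder δ] [Fintype α] [Fintype β]
    [Fintype γ] [Fintype δ] (hf : Monotone f) (hg : Monotone g) (hfs : ∀ c, #{a | f a = c} ≤ s)
    (hgs : ∀ d, #{b | g b = d} ≤ s) (hP : ¬ ContainsPattern P q) :
    #P ≤ k ^ 2 * #(P.image (Prod.map f g)) +
      s ^ 2 * (s.choose k * k) * (Fintype.card γ + Fintype.card δ) := by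
  have hite (B W : Finset (γ × δ)) : ∑ b ∈ B, (if b ∈ W then s ^ 2 else 0) ≤ #W * s ^ 2 := by
    rw [← sum_filter, sum_const, smul_eq_mul]
    exact Nat.mul_le_mul_right _ (card_le_card fun b hb => (mem_filter.1 hb).2)
  calc #P = ∑ b ∈ P.image (Prod.map f g), #(block f g P b) := card_eq_sum_card_image _ _
    _ ≤ ∑ b ∈ P.image (Prod.map f g), (k ^ 2 + (if b ∈ wideBlocks f g k P then s ^ 2 else 0) +
          (if b ∈ tallBlocks f g k P then s ^ 2 else 0)) :=
        sum_le_sum fun b _ => card_block_le hfs hgs b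
    _ ≤ #(P.image (Prod.map f g)) * k ^ 2 + #(wideBlocks f g k P) * s ^ 2 +
          #(tallBlocks f g k P) * s ^ 2 := by
        rw [sum_add_distrib, sum_add_distrib, sum_const, smul_eq_mul]
        gcongr <;> exact hite _ _
    _ ≤ #(P.image (Prod.map f g)) * k ^ 2 + Fintype.card γ * (s.choose k * k) * s ^ 2 +
          Fintype.card δ * (s.choose k * k) * s ^ 2 := by
        gcongr
        · exact card_wideBlocks_le hg hfs hP
        · exact card_tallBlocks_le hf hgs hP
    _ = _ := by ring

end Strips

/-! ### The Marcus–Tardos theorem -/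

/-- The index of the block containing `i` when `Fin n` is cut into consecutive blocks of length `s`,
the last ones possibly truncated or empty. -/
def blockIndex (h : n ≤ m * s) (i : Fin n) : Fin m :=
  (i.castLE h).divNat

theorem blockIndex_monotone (h : n ≤ m * s) : Monotone (blockIndex h) := fun _ _ hij =>
  Nat.div_le_div_right hij

theorem card_filter_blockIndex_eq_le (h : n ≤ m * s) (c : Fin m) :
    #{i | blockIndex h i = c} ≤ s := by
  have hinj : Set.InjOn (fun i : Fin n => (i.castLE h).modNat) {i | blockIndex h i = c} :=
    fun i hi j hj hij => Fin.castLE_injective h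
      (finProdFinEquiv.symm.injective (Prod.ext (hi.trans hj.symm) hij))
  exact (card_le_card_of_injOn (t := univ) _ (fun _ _ => mem_univ _)
    (by simpa using hinj)).trans_eq (card_fin s)

theorem exists_le_pow_and_pow_le_mul (hs : 1 < s) (hn : n ≠ 0) :
    ∃ t, n ≤ s ^ t ∧ s ^ t ≤ s * n := by
  refine ⟨Nat.log s n + 1, (Nat.lt_pow_succ_log_self hs n).le, ?_⟩
  rw [pow_succ']
  exact Nat.mul_le_mul_left s (Nat.pow_log_le_self s hn)

theorem card_le_mul_pow_of_not_containsPattern (hs : k ^ 2 < s) (t : ℕ) (hn : n ≤ s ^ t)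
    {P : Finset (Fin n × Fin n)} (hP : ¬ ContainsPattern P q) :
    #P ≤ (2 * s ^ 2 * (s.choose k * k) + 1) * s ^ t := by
  set D := 2 * s ^ 2 * (s.choose k * k) with hD
  induction t generalizing n with
  | zero =>
    calc #P ≤ n * n := by simpa using P.card_le_univ
      _ ≤ 1 * 1 := Nat.mul_le_mul (by simpa using hn) (by simpa using hn)
      _ ≤ (D + 1) * s ^ 0 := by simp
  | succ t ih =>
    have hmono := blockIndex_monotone (pow_succ s t ▸ hn)
    have hfib := card_filter_blockIndex_eq_le (pow_succ s t ▸ hn)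
    have hB := ih le_rfl (mt (.of_image_prodMap hmono hmono) hP)
    have hstep := card_le_mul_card_image_prodMap_add hmono hmono hfib hfib hP
    rw [Fintype.card_fin] at hstep
    calc #P ≤ k ^ 2 * ((D + 1) * s ^ t) + s ^ 2 * (s.choose k * k) * (s ^ t + s ^ t) :=
          hstep.trans (by gcongr)
      _ = (k ^ 2 * (D + 1) + D) * s ^ t := by rw [hD]; ring
      _ ≤ ((k ^ 2 + 1) * (D + 1)) * s ^ t := by gcongr; linarith
      _ ≤ (s * (D + 1)) * s ^ t := by gcongr; omega
      _ = (D + 1) * s ^ (t + 1) := by ring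

theorem marcus_tardos (k : ℕ) :
    ∃ C, ∀ (q : Equiv.Perm (Fin k)) (n : ℕ) (P : Finset (Fin n × Fin n)),
      ¬ ContainsPattern P q → #P ≤ C * n := by
  refine ⟨(2 * (k ^ 2 + 2) ^ 2 * ((k ^ 2 + 2).choose k * k) + 1) * (k ^ 2 + 2), fun q n P hP => ?_⟩
  rcases eq_or_ne n 0 with rfl | hn
  · simp [Subsingleton.elim P ∅]
  obtain ⟨t, hnt, htn⟩ := exists_le_pow_and_pow_le_mul (s := k ^ 2 + 2) (by omega) hn
  rw [mul_assoc]
  exact (card_le_mul_pow_of_not_containsPattern (by omega) t hnt hP).trans (by gcongr)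

/-! ### Counting avoiders -/

theorem card_filter_image_eq_le {σ τ : Type*} [Fintype σ] [DecidableEq τ] {h : σ → τ}
    (hh : ∀ b, #{a | h a = b} ≤ r) (B : Finset τ) :
    #{P : Finset σ | P.image h = B} ≤ 2 ^ (r * #B) := by
  classical
  have hpre : #{a | h a ∈ B} ≤ r * #B :=
    card_le_mul_card_image_of_maps_to (fun a ha => (mem_filter.1 ha).2) r fun b _ =>
      (card_le_card (filter_subset_filter _ (subset_univ _))).trans (hh b)
  calc #{P : Finset σ | P.image h = B} ≤ #(({a | h a ∈ B} : Finset σ).powerset) :=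
        card_le_card fun P hP => by
          obtain rfl := (mem_filter.1 hP).2
          exact mem_powerset.2 fun a ha => by simpa using ⟨_, ha, rfl⟩
    _ ≤ 2 ^ (r * #B) := by
        rw [card_powerset]
        exact Nat.pow_le_pow_right two_pos hpre

open Classical in
/-- The point sets in the `n × n` grid that avoid the pattern `q`. Unlike the graphs of
permutations, they are closed under contraction, which allows a recursion on `n`. -/
noncomputable def avoiders (q : Equiv.Perm (Fin k)) (n : ℕ) : Finset (Finset (Fin n × Fin n)) :=
  {P | ¬ ContainsPattern P q}

theorem mem_avoiders {P : Finset (Fin n × Fin n)} : P ∈ avoiders q n ↔ ¬ ContainsPattern P q := by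
  simp [avoiders]

theorem card_avoiders_le_mul {M : ℕ} (h : n ≤ m * s) (hM : ∀ B ∈ avoiders q m, #B ≤ M) :
    #(avoiders q n) ≤ 2 ^ (s * s * M) * #(avoiders q m) := by
  have hmono := blockIndex_monotone h
  have hfib := card_filter_prodMap_eq_le (card_filter_blockIndex_eq_le h)
    (card_filter_blockIndex_eq_le h)
  refine card_le_mul_card_image_of_maps_to
    (f := fun P => P.image (Prod.map (blockIndex h) (blockIndex h)))
    (fun P hP => mem_avoiders.2 (mt (.of_image_prodMap hmono hmono) (mem_avoiders.1 hP))) _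
    fun B hB => ?_
  calc _ ≤ 2 ^ (s * s * #B) :=
        (card_le_card (filter_subset_filter _ (subset_univ _))).trans
          (card_filter_image_eq_le hfib B)
    _ ≤ 2 ^ (s * s * M) := Nat.pow_le_pow_right two_pos (Nat.mul_le_mul_left _ (hM B hB))

theorem card_avoiders_le_of_le_two_pow {C : ℕ}
    (hC : ∀ (n : ℕ) (P : Finset (Fin n × Fin n)), ¬ ContainsPattern P q → #P ≤ C * n)
    (t : ℕ) (hn : n ≤ 2 ^ t) : #(avoiders q n) ≤ 2 ^ (4 * C * 2 ^ t + 1) := by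
  induction t generalizing n with
  | zero =>
    have hn' : n * n ≤ 1 := Nat.mul_le_mul hn hn
    calc #(avoiders q n) ≤ 2 ^ (n * n) := by simpa using (avoiders q n).card_le_univ
      _ ≤ 2 ^ (4 * C * 2 ^ 0 + 1) := Nat.pow_le_pow_right two_pos (by omega)
  | succ t ih =>
    calc #(avoiders q n) ≤ 2 ^ (2 * 2 * (C * 2 ^ t)) * #(avoiders q (2 ^ t)) :=
          card_avoiders_le_mul (pow_succ 2 t ▸ hn) fun B hB => hC _ B (mem_avoiders.1 hB)
      _ ≤ 2 ^ (2 * 2 * (C * 2 ^ t)) * 2 ^ (4 * C * 2 ^ t + 1) := by gcongr; exact ih le_rfl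
      _ = 2 ^ (4 * C * 2 ^ (t + 1) + 1) := by rw [← pow_add]; ring_nf

/-! ### Graphs of permutations -/

theorem mem_permGraph {p : Equiv.Perm (Fin n)} {x y : Fin n} : (x, y) ∈ permGraph p ↔ p x = y := by
  simp [permGraph]

theorem permGraph_injective : Function.Injective (permGraph (k := n)) := fun _ _ h =>
  Equiv.ext fun _ => mem_permGraph.1 (h.symm ▸ mem_permGraph.2 rfl)

theorem permContains_of_containsPattern_permGraph {p : Equiv.Perm (Fin n)}
    (h : ContainsPattern (permGraph p) q) : PermContains p q := by
  obtain ⟨x, y, hx, hy, hmem⟩ := h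
  refine ⟨x, hx, fun a b => ?_⟩
  rw [mem_permGraph.1 (hmem a), mem_permGraph.1 (hmem b), hy.lt_iff_lt]

theorem card_not_permContains_le_card_avoiders (q : Equiv.Perm (Fin k)) (n : ℕ) :
    Nat.card {p : Equiv.Perm (Fin n) // ¬ PermContains p q} ≤ #(avoiders q n) := by
  rw [← Nat.card_eq_finsetCard]
  exact Nat.card_le_card_of_injective
    (fun p => ⟨permGraph p.1,
      mem_avoiders.2 (mt permContains_of_containsPattern_permGraph p.2)⟩)
    fun _ _ h => Subtype.ext (permGraph_injective (congrArg Subtype.val h))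

end StanleyWilf

/-- The Stanley–Wilf conjecture (Marcus–Tardos theorem). -/
theorem stanley_wilf (k : ℕ) (hk : 0 < k) :
    ∃ c : ℕ, 1 ≤ c ∧ ∀ (q : Equiv.Perm (Fin k)) (n : ℕ), 0 < n →
      Nat.card {p : Equiv.Perm (Fin n) // ¬ PermContains p q} ≤ c ^ n := by
  obtain ⟨C, hC⟩ := marcus_tardos k
  refine ⟨2 ^ (8 * C + 1), Nat.one_le_two_pow, fun q n hn => ?_⟩
  obtain ⟨t, hnt, htn⟩ := exists_le_pow_and_pow_le_mul one_lt_two hn.ne'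
  calc Nat.card {p : Equiv.Perm (Fin n) // ¬ PermContains p q}
      ≤ (avoiders q n).card := card_not_permContains_le_card_avoiders q n
    _ ≤ 2 ^ (4 * C * 2 ^ t + 1) := card_avoiders_le_of_le_two_pow (hC q) t hnt
    _ ≤ 2 ^ (4 * C * (2 * n) + n) := by gcongr <;> omega
    _ = (2 ^ (8 * C + 1)) ^ n := by rw [← pow_mul]; ring_nf
end

section
/- For every permutation q of length k and all positive integers n and m, the number S_{n,m}(q) of permutations of the regular multiset [n]_m avoiding the pattern q is at most G_{n,m}(q), the number of simple bipartite graphs on ([n·m],[n]) that avoid the bipartite graph G_q associated to q as an ordered subgraph. -/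
/-
A word is determined by its graph, and `wordGraph w` contains `permGraph q` exactly when `w` contains
`q`: strictly increasing choices of positions and of letters that carry the edges `(i, q i)` into
`wordGraph w` amount to a subword of `w` ordered like `q`.
-/

section WordGraph

variable {k k' l n : ℕ}

theorem mem_wordGraph {w : Fin l → Fin n} {i : Fin l} {j : Fin n} :
    (i, j) ∈ wordGraph w ↔ w i = j := by
  simp [wordGraph]

theorem wordGraph_injective :
    Function.Injective (wordGraph : (Fin l → Fin n) → Finset (Fin l × Fin n)) := by
  intro w₁ w₂ h
  funext i
  have h_mem : (i, w₂ i) ∈ wordGraph w₁ := h ▸ mem_wordGraph.2 rfl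
  exact mem_wordGraph.1 h_mem

theorem permGraph_eq_wordGraph (q : Equiv.Perm (Fin k)) : permGraph q = wordGraph q :=
  rfl

theorem graphContains_wordGraph_wordGraph_iff {w : Fin l → Fin n} {v : Fin k → Fin k'} :
    GraphContains (wordGraph w) (wordGraph v) ↔
      ∃ (f : Fin k → Fin l) (f' : Fin k' → Fin n),
        StrictMono f ∧ StrictMono f' ∧ ∀ i, w (f i) = f' (v i) := by
  simp only [GraphContains, mem_wordGraph, forall_eq']

theorem graphContains_wordGraph_permGraph_iff {w : Fin l → Fin n} {q : Equiv.Perm (Fin k)} :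
    GraphContains (wordGraph w) (permGraph q) ↔ WordContains w q := by
  rw [permGraph_eq_wordGraph, graphContains_wordGraph_wordGraph_iff]
  constructor
  · rintro ⟨f, f', hf, hf', hwq⟩
    exact ⟨f, hf, fun a b => by rw [hwq, hwq, hf'.lt_iff_lt]⟩
  · rintro ⟨f, hf, hwq⟩
    have hf' : StrictMono fun j => w (f (q.symm j)) := fun a b hab =>
      (hwq _ _).2 (by simpa only [Equiv.apply_symm_apply] using hab)
    exact ⟨f, _, hf, hf', fun i => by rw [Equiv.symm_apply_apply]⟩

end WordGraph

theorem multiset_count_le_graph_count_general {k : ℕ} (q : Equiv.Perm (Fin k)) (l n : ℕ) :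
    Nat.card {w : Fin l → Fin n // ¬ WordContains w q} ≤
      Nat.card {P : Finset (Fin l × Fin n) // ¬ GraphContains P (permGraph q)} :=
  Nat.card_le_card_of_injective
    (Subtype.map wordGraph fun _ => mt graphContains_wordGraph_permGraph_iff.1)
    (Subtype.map_injective _ wordGraph_injective)

/-- `S_{n,m}(q) ≤ G_{n,m}(q)`. -/
theorem multiset_count_le_graph_count {k : ℕ} (q : Equiv.Perm (Fin k)) (n m : ℕ)
    (hn : 0 < n) (hm : 0 < m) :
    Nat.card {w : Fin (n * m) → Fin n // IsRegularWord m w ∧ ¬ WordContains w q} ≤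
      Nat.card {P : Finset (Fin (n * m) × Fin n) // ¬ GraphContains P (permGraph q)} :=
  (Nat.card_mono (Set.toFinite {w | ¬ WordContains w q}) fun _ hw => hw.2).trans
    (multiset_count_le_graph_count_general q (n * m) n)
end

section
/- Let q be a permutation of length k, let m, n be positive integers, and let d be a constant such that every simple bipartite graph on ([n],[n]) avoiding the bipartite graph G_q as an ordered subgraph has at most d·n edges. Then G_{n,m}(q) ≤ (2^m − 1)^(d·n) · G_{n,1}(q), where G_{n,m}(q) denotes the number of simple bipartite graphs on ([n·m],[n]) avoiding G_q. -/
/-! Group the left vertices into consecutive blocks by a monotone surjection `π` and contract each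
block to a point: a graph `G` becomes its image under `Prod.map π id`. If every left vertex of the
pattern has at most one neighbour, an occurrence of the pattern in the contraction lifts to `G` by
choosing one vertex in each block used; since `π` is monotone, the choice keeps the order. So
contraction maps avoiding graphs to avoiding graphs. A graph `G` over a given `P` amounts to one
nonempty subset of a block per edge of `P`, hence there are at most `(2 ^ m - 1) ^ #P` of them when
the blocks have at most `m` elements. -/

open Finset

section ImageCount

variable {α β : Type*} [DecidableEq β]

theorem card_filter_powerset_image_eq (f : α → β) (s : Finset α) (t : Finset β) :
    #{u ∈ s.powerset | u.image f = t} = ∏ b ∈ t, (2 ^ #{a ∈ s | f a = b} - 1) := by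
  classical
  have card_nonempty_subsets (v : Finset α) : #(v.powerset.erase ∅) = 2 ^ #v - 1 := by
    rw [card_erase_of_mem (empty_mem_powerset v), card_powerset]
  simp_rw [← card_nonempty_subsets]
  rw [← card_pi]
  refine card_bij' (fun u _ b _ ↦ {a ∈ u | f a = b})
    (fun g _ ↦ {a ∈ s | ∃ h : f a ∈ t, a ∈ g (f a) h}) ?_ ?_ ?_ ?_
  · intro u hu
    obtain ⟨hus, rfl⟩ : u ⊆ s ∧ u.image f = t := by simpa using hu
    simp only [mem_pi, mem_erase, mem_powerset]
    exact fun b hb ↦ ⟨(fiber_nonempty_iff_mem_image.2 hb).ne_empty, filter_subset_filter _ hus⟩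
  · intro g hg
    simp only [mem_pi, mem_erase, mem_powerset, ← nonempty_iff_ne_empty] at hg
    simp only [mem_filter, mem_powerset, filter_subset, true_and]
    ext b
    simp only [mem_image, mem_filter]
    constructor
    · rintro ⟨a, ⟨-, h, -⟩, rfl⟩
      exact h
    · intro hb
      obtain ⟨⟨a, ha⟩, hgs⟩ := hg b hb
      obtain ⟨has, rfl⟩ := mem_filter.1 (hgs ha)
      exact ⟨a, ⟨has, hb, ha⟩, rfl⟩
  · intro u hu
    obtain ⟨hus, rfl⟩ : u ⊆ s ∧ u.image f = t := by simpa using hu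
    ext a
    simp only [mem_filter, and_true]
    exact ⟨fun ⟨_, _, ha⟩ ↦ ha, fun ha ↦ ⟨hus ha, mem_image_of_mem f ha, ha⟩⟩
  · intro g hg
    simp only [mem_pi, mem_erase, mem_powerset] at hg
    ext b hb a
    simp only [mem_filter]
    constructor
    · rintro ⟨⟨_, _, ha⟩, rfl⟩
      exact ha
    · intro ha
      obtain ⟨has, rfl⟩ := mem_filter.1 ((hg b hb).2 ha)
      exact ⟨⟨has, hb, ha⟩, rfl⟩

theorem card_filter_powerset_image_eq_le {f : α → β} {s : Finset α} {t : Finset β} {m : ℕ}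
    (hf : ∀ b ∈ t, #{a ∈ s | f a = b} ≤ m) :
    #{u ∈ s.powerset | u.image f = t} ≤ (2 ^ m - 1) ^ #t := by
  rw [card_filter_powerset_image_eq]
  refine prod_le_pow_card _ _ _ fun b hb ↦ Nat.sub_le_sub_right ?_ 1
  exact Nat.pow_le_pow_right two_pos (hf b hb)

end ImageCount

theorem card_filter_prodMap_id_eq {α β γ : Type*} [Fintype α] [Fintype γ] [DecidableEq β]
    [DecidableEq γ] (f : α → β) (p : β × γ) :
    #{x : α × γ | Prod.map f id x = p} = #{a | f a = p.1} := by
  have fiber_eq : ({x | Prod.map f id x = p} : Finset (α × γ)) =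
      ({a | f a = p.1} : Finset α) ×ˢ {p.2} := by
    ext x
    simp [Prod.ext_iff, eq_comm]
  rw [fiber_eq, card_product, card_singleton, mul_one]

theorem card_filter_divNat_eq {n m : ℕ} (i : Fin n) : #{t : Fin (n * m) | t.divNat = i} = m := by
  have fiber_eq : ({t | t.divNat = i} : Finset (Fin (n * m))) =
      ({i} ×ˢ univ).map finProdFinEquiv.toEmbedding := by
    ext t
    simp [mem_map_equiv, eq_comm]
  rw [fiber_eq, card_map, card_product, card_singleton, card_univ, Fintype.card_fin, one_mul]

theorem monotone_divNat (n m : ℕ) : Monotone (Fin.divNat : Fin (n * m) → Fin n) :=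
  fun _ _ h ↦ Nat.div_le_div_right h

theorem surjective_divNat (n : ℕ) {m : ℕ} (hm : 0 < m) :
    Function.Surjective (Fin.divNat : Fin (n * m) → Fin n) :=
  fun i ↦ ⟨Fin.mkDivMod i ⟨0, hm⟩, Fin.divNat_mkDivMod i _⟩

theorem injOn_fst_permGraph {k : ℕ} (q : Equiv.Perm (Fin k)) :
    Set.InjOn Prod.fst (permGraph q : Set (Fin k × Fin k)) := by
  simp only [permGraph, coe_image, coe_univ, Set.image_univ]
  rintro _ ⟨i, rfl⟩ _ ⟨_, rfl⟩ rfl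
  rfl

section Contraction

variable {k k' N n n' : ℕ} {π : Fin N → Fin n} {Q : Finset (Fin k × Fin k')}

theorem GraphContains.of_image {G : Finset (Fin N × Fin n')} (hπ : Monotone π)
    (hπ' : Function.Surjective π) (hQ : Set.InjOn Prod.fst (Q : Set (Fin k × Fin k')))
    (h : GraphContains (G.image (Prod.map π id)) Q) : GraphContains G Q := by
  obtain ⟨f, f', hf, hf', hfG⟩ := h
  have exists_lift (v : Fin k) : ∃ t, π t = f v ∧ ∀ v', (v, v') ∈ Q → (t, f' v') ∈ G := by
    by_cases hv : ∃ w, (v, w) ∈ Q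
    · obtain ⟨w, hw⟩ := hv
      obtain ⟨⟨t, j⟩, htG, htj⟩ := mem_image.1 (hfG v w hw)
      obtain ⟨ht, rfl⟩ : π t = f v ∧ j = f' w := by simpa using htj
      refine ⟨t, ht, fun v' hv' ↦ ?_⟩
      obtain rfl : v' = w := congrArg Prod.snd (hQ hv' hw rfl)
      exact htG
    · obtain ⟨t, ht⟩ := hπ' (f v)
      exact ⟨t, ht, fun v' hv' ↦ (hv ⟨v', hv'⟩).elim⟩
  choose g hgf hgG using exists_lift
  have hg : StrictMono g := fun a b hab ↦ hπ.reflect_lt (by simpa only [hgf] using hf hab)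
  exact ⟨g, f', hg, hf', hgG⟩

theorem graph_count_contraction_bound_general {m c : ℕ} (hπ : Monotone π)
    (hπ' : Function.Surjective π) (hπm : ∀ i, #{t | π t = i} ≤ m) (hm : 0 < m)
    (hQ : Set.InjOn Prod.fst (Q : Set (Fin k × Fin k')))
    (hc : ∀ P : Finset (Fin n × Fin n'), ¬ GraphContains P Q → #P ≤ c) :
    Nat.card {G : Finset (Fin N × Fin n') // ¬ GraphContains G Q} ≤
      (2 ^ m - 1) ^ c * Nat.card {P : Finset (Fin n × Fin n') // ¬ GraphContains P Q} := by
  classical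
  simp only [Nat.card_eq_fintype_card, Fintype.card_subtype]
  refine card_le_mul_card_image_of_maps_to (f := image (Prod.map π id)) ?_ _ fun P hP ↦ ?_
  · simp only [mem_filter_univ]
    exact fun G hG h ↦ hG (h.of_image hπ hπ' hQ)
  have fiber_le (p : Fin n × Fin n') : #{x | Prod.map π id x = p} ≤ m :=
    (card_filter_prodMap_id_eq π p).trans_le (hπm p.1)
  calc #{G ∈ ({G | ¬ GraphContains G Q} : Finset (Finset (Fin N × Fin n'))) |
          G.image (Prod.map π id) = P}
      ≤ #{G ∈ univ.powerset | G.image (Prod.map π id) = P} :=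
        card_le_card (filter_subset_filter _ fun G _ ↦ mem_powerset.2 (subset_univ G))
    _ ≤ (2 ^ m - 1) ^ #P := card_filter_powerset_image_eq_le fun p _ ↦ fiber_le p
    _ ≤ (2 ^ m - 1) ^ c := Nat.pow_le_pow_right
        (Nat.sub_pos_of_lt (Nat.one_lt_two_pow hm.ne')) (hc P (mem_filter_univ P |>.1 hP))

end Contraction

/-- `G_{n,m}(q) ≤ (2^m - 1)^(d·n) · G_{n,1}(q)`. -/
theorem graph_count_contraction_bound {k : ℕ} (q : Equiv.Perm (Fin k)) (n m d : ℕ)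
    (hn : 0 < n) (hm : 0 < m)
    (hd : ∀ P : Finset (Fin n × Fin n), ¬ GraphContains P (permGraph q) → P.card ≤ d * n) :
    Nat.card {G : Finset (Fin (n * m) × Fin n) // ¬ GraphContains G (permGraph q)} ≤
      (2 ^ m - 1) ^ (d * n) *
        Nat.card {P : Finset (Fin n × Fin n) // ¬ GraphContains P (permGraph q)} :=
  graph_count_contraction_bound_general (monotone_divNat n m) (surjective_divNat n hm)
    (fun i ↦ (card_filter_divNat_eq i).le) hm (injOn_fst_permGraph q) hd
end
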